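/- For integer M ≥ 2, nonnegative integers n, l, and real ν < M + 2(l+n) (so that the integral converges), the functions η^{(M)}_{n,l}(r) = (2/Γ(l+M/2)) · sqrt((n+l+(M-1)/2) Γ(n+2l+M-1)/n!) · r^l (r²+1)^{-(l+M/2)} · ₂F₁(-n, n+2l+M-1; l+M/2; 1/(r²+1)) satisfy the orthogonality relation ∫_0^∞ r^{M-1} η^{(M)}_{n₁,l}(r) η^{(M)}_{n₂,l}(r) dr = δ_{n₁,n₂}. -/

import Mathlib

open Finset

/-- Pochhammer (rising factorial) `(a)_k`. -/
noncomputable def poch (a : ℝ) (k : ℕ) : ℝ := ∏ i ∈ Finset.range k, (a + i)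

/-- Terminating Gauss hypergeometric series `₂F₁(-n, b; c; x)`. -/
noncomputable def F21fin (n : ℕ) (b c x : ℝ) : ℝ :=
  ∑ k ∈ Finset.range (n + 1),
    poch (-(n : ℝ)) k * poch b k / (poch c k * k.factorial) * x ^ k

/-- The radial functions `η^{(M)}_{n,l}(r)`. -/
noncomputable def eta (M n l : ℕ) (r : ℝ) : ℝ :=
  2 / Real.Gamma ((l : ℝ) + M / 2) *
    Real.sqrt (((n : ℝ) + l + ((M : ℝ) - 1) / 2) *
      Real.Gamma ((n : ℝ) + 2 * l + M - 1) / n.factorial) *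
    (r ^ l / (r ^ 2 + 1) ^ ((l : ℝ) + M / 2)) *
    F21fin n ((n : ℝ) + 2 * l + M - 1) ((l : ℝ) + M / 2) (1 / (r ^ 2 + 1))

open MeasureTheory Polynomial in
theorem altS_succ (n : ℕ) (f : ℕ → ℝ) :
    ∑ k ∈ Finset.range (n + 2), (-1 : ℝ) ^ k * ((n + 1).choose k : ℝ) * f k =
      ∑ k ∈ Finset.range (n + 1), (-1 : ℝ) ^ k * (n.choose k : ℝ) * f k -
      ∑ k ∈ Finset.range (n + 1), (-1 : ℝ) ^ k * (n.choose k : ℝ) * f (k + 1) := by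
  rw [Finset.sum_range_succ']
  simp only [Nat.choose_succ_succ, Nat.cast_add]
  have h : ∑ k ∈ Finset.range (n + 1), (-1 : ℝ) ^ k * (n.choose k : ℝ) * f k
      = ∑ k ∈ Finset.range (n + 1), (-1 : ℝ) ^ (k + 1) * (n.choose (k + 1) : ℝ) * f (k + 1) + f 0 := by
    have h1 := Finset.sum_range_succ' (fun k => (-1 : ℝ) ^ k * (n.choose k : ℝ) * f k) (n + 1)
    rw [Finset.sum_range_succ] at h1
    simpa using h1
  rw [h]
  simp only [pow_succ]
  have : ∀ A B D E : ℝ, A = D - B → A + E = D + E - B := by intros; linarith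
  simp only [pow_zero, Nat.choose_zero_right, Nat.cast_one, one_mul]
  apply this
  rw [← Finset.sum_sub_distrib]
  apply Finset.sum_congr rfl
  intros
  ring

theorem altS_inv (n : ℕ) : ∀ (z : ℝ), 0 < z →
    ∑ k ∈ Finset.range (n + 1), (-1 : ℝ) ^ k * (n.choose k : ℝ) * (1 / (z + k)) =
      n.factorial / poch z (n + 1) := by
  induction n with
  | zero => intro z hz; simp [poch]
  | succ n ih =>
    intro z hz
    rw [altS_succ, ih z hz]
    have h2 := ih (z + 1) (by linarith)
    have h3 : ∑ k ∈ Finset.range (n + 1), (-1 : ℝ) ^ k * (n.choose k : ℝ) * (1 / (z + ((k + 1 : ℕ) : ℝ)))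
        = n.factorial / poch (z + 1) (n + 1) := by
      rw [← h2]
      apply Finset.sum_congr rfl
      intro k _
      push_cast
      rw [show z + (k + 1 : ℝ) = z + 1 + k by ring]
    rw [h3]
    have hp : ∀ a : ℝ, 0 < a → ∀ m, 0 < poch a m := by
      intro a ha m
      exact Finset.prod_pos (fun i _ => by positivity)
    have e1 : poch z (n + 2) = poch z (n + 1) * (z + (n + 1 : ℕ)) := by
      unfold poch; rw [Finset.prod_range_succ]
    have e2 : poch z (n + 2) = poch (z + 1) (n + 1) * z := by
      unfold poch; rw [Finset.prod_range_succ']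
      simp only [Nat.cast_zero, add_zero]
      congr 1
      apply Finset.prod_congr rfl
      intros; push_cast; ring
    have p1 := hp z hz (n + 1)
    have p2 := hp (z + 1) (by linarith) (n + 1)
    have p3 := hp z hz (n + 2)
    have q1 : (n.factorial : ℝ) / poch z (n + 1) = n.factorial * (z + (n + 1 : ℕ)) / poch z (n + 2) := by
      rw [e1]; field_simp
    have q2 : (n.factorial : ℝ) / poch (z + 1) (n + 1) = n.factorial * z / poch z (n + 2) := by
      rw [e2]; field_simp
    rw [q1, q2, Nat.factorial_succ]
    push_cast
    ring

theorem altS_poly_zero (n : ℕ) (Q : Polynomial ℝ) (hQ : Q.natDegree < n) :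
    ∑ k ∈ Finset.range (n + 1), (-1 : ℝ) ^ k * (n.choose k : ℝ) * Q.eval (k : ℝ) = 0 := by
  have h := congrFun (Polynomial.fwdDiff_iter_eq_zero_of_degree_lt hQ) 0
  rw [fwdDiff_iter_eq_sum_shift] at h
  have h2 : ∑ k ∈ Finset.range (n + 1), (-1 : ℝ) ^ k * (n.choose k : ℝ) * Q.eval (k : ℝ)
    = (-1) ^ n * ∑ k ∈ Finset.range (n + 1), ((-1 : ℤ) ^ (n - k) * n.choose k) • Q.eval (0 + k • (1:ℝ)) := by
    rw [Finset.mul_sum]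
    apply Finset.sum_congr rfl
    intro k hk
    have hk' : k ≤ n := by simpa [Nat.lt_succ_iff] using hk
    obtain ⟨m, rfl⟩ := Nat.exists_eq_add_of_le hk'
    simp only [zsmul_eq_mul, nsmul_eq_mul, mul_one, zero_add, Nat.add_sub_cancel_left]
    push_cast
    rw [pow_add]
    have : ((-1 : ℝ) ^ m) * (-1) ^ m = 1 := by rw [← mul_pow]; norm_num
    linear_combination (-(-1 : ℝ) ^ k * ((k+m).choose k : ℝ) * Q.eval (k : ℝ)) * this
  rw [h2, h]
  simp

theorem altS_poly (n : ℕ) (P : Polynomial ℝ) (hP : P.natDegree ≤ n) (z : ℝ) (hz : 0 < z) :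
    ∑ k ∈ Finset.range (n + 1), (-1 : ℝ) ^ k * (n.choose k : ℝ) * (P.eval (k : ℝ) / (z + k)) =
      P.eval (-z) * (n.factorial / poch z (n + 1)) := by
  set Q := P /ₘ (Polynomial.X - Polynomial.C (-z)) with hQ
  have hdec := Polynomial.modByMonic_add_div P (Polynomial.X - Polynomial.C (-z))
  rw [Polynomial.modByMonic_X_sub_C_eq_C_eval, ← hQ] at hdec
  have hQd : Q.natDegree = P.natDegree - 1 := by
    rw [hQ, Polynomial.natDegree_divByMonic _ (Polynomial.monic_X_sub_C _), Polynomial.natDegree_X_sub_C]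
  have hev : ∀ k : ℕ, P.eval (k : ℝ) / (z + k) = P.eval (-z) * (1 / (z + k)) + Q.eval (k : ℝ) := by
    intro k
    have hne : z + (k : ℝ) ≠ 0 := by positivity
    have := congrArg (Polynomial.eval (k : ℝ)) hdec
    simp only [Polynomial.eval_add, Polynomial.eval_mul, Polynomial.eval_sub, Polynomial.eval_C, Polynomial.eval_X] at this
    rw [← this]
    field_simp
    ring
  have hQ0 : ∑ k ∈ Finset.range (n + 1), (-1 : ℝ) ^ k * (n.choose k : ℝ) * Q.eval (k : ℝ) = 0 := by
    rcases Nat.eq_zero_or_pos P.natDegree with h0 | h0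
    · have : Q = 0 := by
        rw [hQ, Polynomial.divByMonic_eq_zero_iff (Polynomial.monic_X_sub_C _), Polynomial.degree_X_sub_C]
        rw [Polynomial.eq_C_of_natDegree_eq_zero h0]
        exact lt_of_le_of_lt Polynomial.degree_C_le (by norm_num)
      simp [this]
    · exact altS_poly_zero n Q (by omega)
  calc _ = P.eval (-z) * ∑ k ∈ Finset.range (n + 1), (-1 : ℝ) ^ k * (n.choose k : ℝ) * (1 / (z + k))
        + ∑ k ∈ Finset.range (n + 1), (-1 : ℝ) ^ k * (n.choose k : ℝ) * Q.eval (k : ℝ) := by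
        rw [Finset.mul_sum, ← Finset.sum_add_distrib]
        apply Finset.sum_congr rfl
        intro k _
        rw [hev]; ring
    _ = _ := by rw [hQ0, altS_inv n z hz, add_zero]

theorem poch_succ (a : ℝ) (k : ℕ) : poch a (k + 1) = poch a k * (a + k) := by
  unfold poch; rw [Finset.prod_range_succ]

theorem poch_pos (a : ℝ) (ha : 0 < a) (k : ℕ) : 0 < poch a k :=
  Finset.prod_pos (fun i _ => by positivity)

theorem poch_Gamma (a : ℝ) (ha : 0 < a) (k : ℕ) :
    Real.Gamma (a + k) = poch a k * Real.Gamma a := by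
  induction k with
  | zero => simp [poch]
  | succ k ih =>
    have : a + ((k + 1 : ℕ) : ℝ) = (a + k) + 1 := by push_cast; ring
    rw [this, Real.Gamma_add_one (by positivity), ih, poch_succ]; ring

theorem poch_neg (n k : ℕ) :
    poch (-(n : ℝ)) k = (-1) ^ k * (n.choose k : ℝ) * k.factorial := by
  induction k with
  | zero => simp [poch]
  | succ k ih =>
    rw [poch_succ, ih, Nat.factorial_succ]
    rcases le_or_gt k n with h | h
    · have := congrArg (Nat.cast : ℕ → ℝ) (Nat.choose_succ_right_eq n k)
      push_cast [Nat.cast_sub h] at this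
      push_cast
      rw [pow_succ]
      linear_combination ((-1 : ℝ) ^ k * k.factorial) * this
    · rw [Nat.choose_eq_zero_of_lt h, Nat.choose_eq_zero_of_lt (by omega)]; simp

theorem poch_refl (c : ℝ) (n : ℕ) : poch (1 - c - n) n = (-1) ^ n * poch c n := by
  unfold poch
  rw [← Finset.prod_range_reflect]
  rw [← Finset.card_range n, ← Finset.prod_const, Finset.card_range, ← Finset.prod_mul_distrib]
  apply Finset.prod_congr rfl
  intro i hi
  have hi' : i + 1 ≤ n := by simpa using hi
  rw [show n - 1 - i = n - (i + 1) by omega, Nat.cast_sub hi']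
  push_cast; ring

/-- coefficients -/
noncomputable def cf (n : ℕ) (c : ℝ) (k : ℕ) : ℝ :=
  poch (-(n : ℝ)) k * poch (n + 2 * c - 1) k / (poch c k * k.factorial)

noncomputable def mom (c : ℝ) (k : ℕ) : ℝ :=
  Real.Gamma (c + k) * Real.Gamma c / Real.Gamma (2 * c + k)

theorem cf_mom (n j : ℕ) (hj : j ≤ n) (c : ℝ) (hc : 1 ≤ c) :
    ∑ k ∈ Finset.range (n + 1), cf n c k * mom c (j + k) =
      if j = n then Real.Gamma c ^ 2 / Real.Gamma (n + 2 * c - 1) *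
        ((-1) ^ n * poch c n * (n.factorial / poch (n + 2 * c - 1) (n + 1))) else 0 := by
  set z : ℝ := n + 2 * c - 1 with hz
  have hz0 : 0 < z := by have : (0:ℝ) ≤ n := by positivity
                         linarith
  let P : Polynomial ℝ := (∏ i ∈ Finset.range j, (Polynomial.X + Polynomial.C (c + i))) *
    ∏ i ∈ Finset.range (n - j), (Polynomial.X + Polynomial.C (2 * c + j + i))
  have hPd : P.natDegree ≤ n := by
    refine Polynomial.natDegree_mul_le.trans ?_
    have h1 := Polynomial.natDegree_prod_le (Finset.range j) (fun i : ℕ => (Polynomial.X + Polynomial.C (c + i)))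
    have h2 := Polynomial.natDegree_prod_le (Finset.range (n - j)) (fun i : ℕ => (Polynomial.X + Polynomial.C (2 * c + j + i)))
    simp only [Polynomial.natDegree_X_add_C, Finset.sum_const, Finset.card_range, smul_eq_mul, mul_one] at h1 h2
    omega
  have hPe : ∀ x : ℝ, P.eval x = poch (c + x) j * poch (2 * c + j + x) (n - j) := by
    intro x
    simp only [P, Polynomial.eval_mul, Polynomial.eval_prod, Polynomial.eval_add, Polynomial.eval_X, Polynomial.eval_C, poch]
    congr 1 <;> (apply Finset.prod_congr rfl; intros; ring)
  have hterm : ∀ k : ℕ, cf n c k * mom c (j + k) = Real.Gamma c ^ 2 / Real.Gamma z *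
      ((-1 : ℝ) ^ k * (n.choose k : ℝ) * (P.eval (k : ℝ) / (z + k))) := by
    intro k
    have hk0 : (0:ℝ) ≤ k := by positivity
    have hj0 : (0:ℝ) ≤ j := by positivity
    have g1 := poch_Gamma (c + k) (by linarith) j
    have g2 := poch_Gamma (2 * c + j + k) (by linarith) (n - j)
    have g3 := poch_Gamma z hz0 k
    have g4 := poch_Gamma c (by linarith) k
    have g5 := Real.Gamma_add_one (s := z + k) (by positivity)
    rw [show 2 * c + j + k + ((n - j : ℕ) : ℝ) = z + k + 1 by rw [Nat.cast_sub hj]; ring, g5, g3] at g2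
    rw [g4] at g1
    rw [hPe, cf, mom, poch_neg]
    push_cast
    rw [show c + ((j : ℝ) + k) = c + k + j by ring, g1, show 2 * c + ((j : ℝ) + k) = 2 * c + j + k by ring]
    have G1 := (Real.Gamma_pos_of_pos hz0).ne'
    have G2 := (Real.Gamma_pos_of_pos (show 0 < 2 * c + j + k by linarith)).ne'
    have G3 := (poch_pos c (by linarith) k).ne'
    have G4 : z + k ≠ 0 := by positivity
    have G5 : (k.factorial : ℝ) ≠ 0 := by positivity
    rw [← hz]
    clear_value z
    generalize 2 * c + (j : ℝ) + k = y at *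
    field_simp
    linear_combination ((n.choose k : ℝ) * poch (c + k) j) * g2
  rw [Finset.sum_congr rfl (fun k _ => hterm k), ← Finset.mul_sum, altS_poly n P hPd z hz0, hPe]
  split_ifs with h
  · subst h
    simp only [Nat.sub_self]
    rw [show c + -z = 1 - c - j by rw [hz]; ring, poch_refl]
    simp [poch]
  · have : poch (2 * c + j + -z) (n - j) = 0 := by
      unfold poch
      apply Finset.prod_eq_zero (i := n - j - 1) (by simp; omega)
      rw [show n - j - 1 = n - (j + 1) by omega, Nat.cast_sub (by omega), hz]
      push_cast; ring
    rw [this]; simp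

theorem cf_mom2 (n m : ℕ) (hm : m ≤ n) (c : ℝ) (hc : 1 ≤ c) :
    ∑ j ∈ Finset.range (m + 1), ∑ k ∈ Finset.range (n + 1), cf m c j * cf n c k * mom c (j + k) =
      if n = m then Real.Gamma c ^ 2 * n.factorial / (Real.Gamma (n + 2 * c - 1) * (2 * n + 2 * c - 1))
      else 0 := by
  have h : ∀ j ∈ Finset.range (m + 1), ∑ k ∈ Finset.range (n + 1), cf m c j * cf n c k * mom c (j + k)
      = cf m c j * if j = n then Real.Gamma c ^ 2 / Real.Gamma (n + 2 * c - 1) *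
        ((-1) ^ n * poch c n * (n.factorial / poch (n + 2 * c - 1) (n + 1))) else 0 := by
    intro j hj
    rw [← cf_mom n j (by simp at hj; omega) c hc, Finset.mul_sum]
    simp only [mul_assoc]
  rw [Finset.sum_congr rfl h]
  simp only [mul_ite, mul_zero, Finset.sum_ite_eq', Finset.mem_range]
  split_ifs with h1 h2 h2
  · subst h2
    have hz0 : 0 < (n : ℝ) + 2 * c - 1 := by
      have : (0:ℝ) ≤ n := by positivity
      linarith
    rw [cf, poch_neg, poch_succ, Nat.choose_self]
    have G1 := (Real.Gamma_pos_of_pos hz0).ne'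
    have G2 := (poch_pos _ hz0 n).ne'
    have G3 := (poch_pos c (by linarith) n).ne'
    have G4 : (n : ℝ) + 2 * c - 1 + n ≠ 0 := by positivity
    have G6 : (2 * n : ℝ) + 2 * c - 1 ≠ 0 := by intro h; apply G4; linarith
    have G5 : (n.factorial : ℝ) ≠ 0 := by positivity
    have s : ((-1 : ℝ) ^ n) * (-1) ^ n = 1 := by rw [← mul_pow]; norm_num
    have e : (n : ℝ) + 2 * c - 1 + n = 2 * n + 2 * c - 1 := by ring
    rw [e]
    generalize (2 * n : ℝ) + 2 * c - 1 = y at *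
    push_cast
    field_simp
    linear_combination s
  · omega
  · omega
  · rfl

theorem mom_eq (c : ℝ) (hc : 1 ≤ c) (k : ℕ) :
    ∫ x in (0:ℝ)..1, x ^ (c - 1) * (1 - x) ^ (c - 1) * x ^ k = mom c k := by
  have hck : 0 < c + k := by positivity
  have h := Complex.betaIntegral_eq_Gamma_mul_div ((c + k : ℝ) : ℂ) (c : ℂ)
    (by simpa using hck) (by simp; linarith)
  have h2 : Complex.betaIntegral ((c + k : ℝ) : ℂ) (c : ℂ) =
      ((∫ x in (0:ℝ)..1, x ^ (c - 1) * (1 - x) ^ (c - 1) * x ^ k : ℝ) : ℂ) := by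
    rw [Complex.betaIntegral, ← intervalIntegral.integral_ofReal]
    rw [intervalIntegral.integral_of_le zero_le_one, intervalIntegral.integral_of_le zero_le_one]
    apply MeasureTheory.setIntegral_congr_fun measurableSet_Ioc
    intro x hx
    have hx0 : 0 < x := hx.1
    have hx1 : 0 ≤ 1 - x := by linarith [hx.2]
    have e1 : x ^ (c - 1) * (1 - x) ^ (c - 1) * x ^ k = x ^ (c + k - 1) * (1 - x) ^ (c - 1) := by
      rw [show c + k - 1 = (c - 1) + k by ring, Real.rpow_add hx0, Real.rpow_natCast]; ring
    simp only
    rw [e1]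
    push_cast
    rw [Complex.ofReal_cpow hx0.le, Complex.ofReal_cpow hx1]
    push_cast
    rfl
  rw [h2, ← Complex.ofReal_add, Complex.Gamma_ofReal, Complex.Gamma_ofReal, Complex.Gamma_ofReal] at h
  rw [mom]
  have h3 : c + k + c = 2 * c + k := by ring
  rw [h3] at h
  exact_mod_cast h

theorem F21_eq (n : ℕ) (c x : ℝ) :
    F21fin n (n + 2 * c - 1) c x = ∑ k ∈ Finset.range (n + 1), cf n c k * x ^ k := rfl

theorem F21_cont (n : ℕ) (b c : ℝ) : Continuous (F21fin n b c) := by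
  unfold F21fin
  fun_prop

theorem int_F (n m : ℕ) (c : ℝ) (hc : 1 ≤ c) :
    ∫ x in (0:ℝ)..1, x ^ (c - 1) * (1 - x) ^ (c - 1) *
      (F21fin n (n + 2 * c - 1) c x * F21fin m (m + 2 * c - 1) c x) =
      ∑ j ∈ Finset.range (m + 1), ∑ k ∈ Finset.range (n + 1), cf m c j * cf n c k * mom c (j + k) := by
  have hcont : ∀ j k : ℕ, Continuous (fun x : ℝ => cf m c j * cf n c k *
      (x ^ (c - 1) * (1 - x) ^ (c - 1) * x ^ (j + k))) := by
    intro j k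
    have h1 : Continuous (fun x : ℝ => x ^ (c - 1)) :=
      Real.continuous_rpow_const (by linarith)
    have h2 : Continuous (fun x : ℝ => (1 - x) ^ (c - 1)) :=
      h1.comp (continuous_const.sub continuous_id)
    fun_prop
  have e : ∀ x : ℝ, x ^ (c - 1) * (1 - x) ^ (c - 1) *
      (F21fin n (n + 2 * c - 1) c x * F21fin m (m + 2 * c - 1) c x) =
      ∑ j ∈ Finset.range (m + 1), ∑ k ∈ Finset.range (n + 1), cf m c j * cf n c k *
      (x ^ (c - 1) * (1 - x) ^ (c - 1) * x ^ (j + k)) := by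
    intro x
    rw [F21_eq, F21_eq, mul_comm (∑ k ∈ Finset.range (n + 1), _), Finset.sum_mul_sum, Finset.mul_sum]
    apply Finset.sum_congr rfl; intro j _
    rw [Finset.mul_sum]
    apply Finset.sum_congr rfl; intro k _
    rw [pow_add]; ring
  simp only [e]
  rw [intervalIntegral.integral_finsetSum]
  · apply Finset.sum_congr rfl; intro j _
    rw [intervalIntegral.integral_finsetSum]
    · apply Finset.sum_congr rfl; intro k _
      rw [intervalIntegral.integral_const_mul, mom_eq c hc]
    · intro k _; exact (hcont j k).intervalIntegrable _ _
  · intro j _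
    exact (continuous_finsetSum _ (fun k _ => hcont j k)).intervalIntegrable _ _

theorem chg (f : ℝ → ℝ) :
    ∫ x in (0:ℝ)..1, f x = ∫ r in Set.Ioi (0:ℝ), (2 * r / (r ^ 2 + 1) ^ 2) * f (1 / (r ^ 2 + 1)) := by
  have him : (fun r : ℝ => 1 / (r ^ 2 + 1)) '' Set.Ioi 0 = Set.Ioo 0 1 := by
    ext x
    simp only [Set.mem_image, Set.mem_Ioi, Set.mem_Ioo]
    constructor
    · rintro ⟨r, hr, rfl⟩
      refine ⟨by positivity, ?_⟩
      rw [div_lt_one (by positivity)]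
      nlinarith
    · rintro ⟨h0, h1⟩
      have hp : 0 < 1 / x - 1 := by
        rw [sub_pos, lt_div_iff₀ h0]; linarith
      refine ⟨Real.sqrt (1 / x - 1), Real.sqrt_pos.mpr hp, ?_⟩
      rw [Real.sq_sqrt hp.le]
      simp
  have hd : ∀ r ∈ Set.Ioi (0:ℝ), HasDerivWithinAt (fun r : ℝ => 1 / (r ^ 2 + 1))
      (-(2 * r / (r ^ 2 + 1) ^ 2)) (Set.Ioi 0) r := by
    intro r _
    have h : HasDerivAt (fun r : ℝ => r ^ 2 + 1) (2 * r) r := by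
      simpa using (hasDerivAt_pow 2 r).add_const 1
    have h2 := h.inv (by positivity)
    apply HasDerivAt.hasDerivWithinAt
    simp only [one_div]
    convert! h2 using 1
    ring
  have hanti : AntitoneOn (fun r : ℝ => 1 / (r ^ 2 + 1)) (Set.Ioi 0) := by
    intro a ha b hb hab
    have ha' : 0 < a := ha
    simp only
    gcongr
  have h := MeasureTheory.integral_image_eq_integral_deriv_smul_of_antitoneOn measurableSet_Ioi hd hanti f
  rw [him] at h
  rw [intervalIntegral.integral_of_le zero_le_one, MeasureTheory.integral_Ioc_eq_integral_Ioo, h]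
  simp

theorem wt (M l : ℕ) (hM : 2 ≤ M) (r : ℝ) (hr : 0 < r) :
    r ^ (M - 1) * (r ^ l / (r ^ 2 + 1) ^ ((l : ℝ) + M / 2)) * (r ^ l / (r ^ 2 + 1) ^ ((l : ℝ) + M / 2)) =
    (2 * r / (r ^ 2 + 1) ^ 2) * ((1 / (r ^ 2 + 1)) ^ ((l : ℝ) + M / 2 - 1) *
      (1 - 1 / (r ^ 2 + 1)) ^ ((l : ℝ) + M / 2 - 1)) / 2 := by
  have hs : 0 < r ^ 2 + 1 := by positivity
  set c : ℝ := (l : ℝ) + M / 2 with hc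
  have e1 : 1 - 1 / (r ^ 2 + 1) = r ^ 2 / (r ^ 2 + 1) := by field_simp; ring
  have e2 : (r ^ 2) ^ (c - 1) = r ^ (2 * l + M - 2 : ℕ) := by
    rw [← Real.rpow_natCast r 2, ← Real.rpow_mul hr.le, ← Real.rpow_natCast r (2 * l + M - 2),
      Nat.cast_sub (by omega)]
    congr 1
    rw [hc]; push_cast; ring
  rw [e1, Real.div_rpow (by positivity) hs.le, Real.div_rpow (by positivity) hs.le, e2, Real.one_rpow,
    Real.rpow_sub_one hs.ne']
  have hp : 0 < (r ^ 2 + 1) ^ c := by positivity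
  obtain ⟨m, rfl⟩ := Nat.exists_eq_add_of_le hM
  rw [show 2 + m - 1 = m + 1 by omega, show 2 * l + (2 + m) - 2 = 2 * l + m by omega]
  field_simp
  ring

theorem main_le (M : ℕ) (hM : 2 ≤ M) (l n m : ℕ) (hm : m ≤ n) :
    ∫ r in Set.Ioi (0 : ℝ), r ^ (M - 1) * eta M n l r * eta M m l r =
      if n = m then 1 else 0 := by
  set c : ℝ := (l : ℝ) + M / 2 with hc
  have hM' : (2 : ℝ) ≤ M := by exact_mod_cast hM
  have hc1 : 1 ≤ c := by
    have : (0:ℝ) ≤ l := by positivity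
    rw [hc]; linarith
  let K : ℕ → ℝ := fun n => 2 / Real.Gamma c *
    Real.sqrt (((n : ℝ) + l + ((M : ℝ) - 1) / 2) *
      Real.Gamma ((n : ℝ) + 2 * l + M - 1) / n.factorial)
  have hz : ∀ n : ℕ, (n : ℝ) + 2 * l + M - 1 = n + 2 * c - 1 := by intro n; rw [hc]; ring
  have hpt : ∀ r ∈ Set.Ioi (0:ℝ), r ^ (M - 1) * eta M n l r * eta M m l r = (K n * K m / 2) *
      ((2 * r / (r ^ 2 + 1) ^ 2) * ((fun x : ℝ => x ^ (c - 1) * (1 - x) ^ (c - 1) *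
      (F21fin n (n + 2 * c - 1) c x * F21fin m (m + 2 * c - 1) c x)) (1 / (r ^ 2 + 1)))) := by
    intro r hr
    have hw := wt M l hM r hr
    rw [← hc] at hw
    unfold eta
    rw [← hc, ← hz n, ← hz m]
    simp only [K]
    linear_combination ((2 / Real.Gamma c *
    Real.sqrt (((n : ℝ) + l + ((M : ℝ) - 1) / 2) *
      Real.Gamma ((n : ℝ) + 2 * l + M - 1) / n.factorial)) * (2 / Real.Gamma c *
    Real.sqrt (((m : ℝ) + l + ((M : ℝ) - 1) / 2) *
      Real.Gamma ((m : ℝ) + 2 * l + M - 1) / m.factorial)) *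
      F21fin n ((n : ℝ) + 2 * l + M - 1) c (1 / (r ^ 2 + 1)) *
      F21fin m ((m : ℝ) + 2 * l + M - 1) c (1 / (r ^ 2 + 1))) * hw
  rw [MeasureTheory.setIntegral_congr_fun measurableSet_Ioi hpt, MeasureTheory.integral_const_mul,
    ← chg (fun x : ℝ => x ^ (c - 1) * (1 - x) ^ (c - 1) *
      (F21fin n (n + 2 * c - 1) c x * F21fin m (m + 2 * c - 1) c x)), int_F n m c hc1, cf_mom2 n m hm c hc1]
  split_ifs with h
  · subst h
    have hn0 : (0:ℝ) ≤ n := by positivity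
    have hz0 : 0 < (n : ℝ) + 2 * c - 1 := by linarith
    have G1 := Real.Gamma_pos_of_pos hz0
    have G2 := Real.Gamma_pos_of_pos (show 0 < c by linarith)
    have e : (n : ℝ) + l + ((M : ℝ) - 1) / 2 = (2 * n + 2 * c - 1) / 2 := by rw [hc]; ring
    have hy : 0 < 2 * (n : ℝ) + 2 * c - 1 := by linarith
    have hK : K n * K n = (2 / Real.Gamma c) ^ 2 * ((2 * n + 2 * c - 1) / 2 *
        Real.Gamma ((n : ℝ) + 2 * c - 1) / n.factorial) := by
      simp only [K]
      rw [e, hz, mul_mul_mul_comm, Real.mul_self_sqrt (by positivity)]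
      ring
    rw [hK]
    generalize 2 * (n : ℝ) + 2 * c - 1 = y at *
    have G5 : (n.factorial : ℝ) ≠ 0 := by positivity
    field_simp
    try norm_num
  · simp

theorem stmt8 (M : ℕ) (hM : 2 ≤ M) (l n₁ n₂ : ℕ) (ν : ℝ)
    (hν₁ : ν < M + 2 * ((l : ℝ) + n₁)) (hν₂ : ν < M + 2 * ((l : ℝ) + n₂)) :
    ∫ r in Set.Ioi (0 : ℝ), r ^ (M - 1) * eta M n₁ l r * eta M n₂ l r =
      if n₁ = n₂ then 1 else 0 := by
  rcases le_total n₂ n₁ with h | h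
  · exact main_le M hM l n₁ n₂ h
  · have := main_le M hM l n₂ n₁ h
    simp only [eq_comm (a := n₁) (b := n₂)]
    rw [← this]
    congr 1
    ext r
    ring
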